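/- Let (Ω, M, μ) be a σ-finite complete measure space and p : Ω → [1,∞) a bounded measurable variable exponent (i.e. ess sup p < ∞). Then the variable exponent Lebesgue space L^{p(·)}(μ) has the bounded approximation property with constant 2: for every compact subset K of L^{p(·)}(μ) and every ε > 0 there exists a finite rank bounded operator F with ||F|| ≤ 2 and ||f - F f||_{L^{p(·)}} < ε for all f in K. -/

import Mathlib

open MeasureTheory Filter Topology ENNReal

/-- The contribution `|t|^{q}` to the variable-exponent modular, with the usual
convention at `q = ∞` (zero if `t ≤ 1`, infinite otherwise). -/
noncomputable def evpow (t : ℝ) (q : ℝ≥0∞) : ℝ≥0∞ :=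
  if q = ∞ then (if t ≤ 1 then 0 else ∞) else ENNReal.ofReal t ^ q.toReal

/-- The modular `∫ |f(x)/λ|^{p(x)} dμ` of a variable exponent Lebesgue space. -/
noncomputable def eModular {Ω : Type*} [MeasurableSpace Ω] (μ : Measure Ω)
    (p : Ω → ℝ≥0∞) {E : Type*} [NormedAddCommGroup E] (f : Ω → E) (lam : ℝ) : ℝ≥0∞ :=
  ∫⁻ x, evpow (‖f x‖ / lam) (p x) ∂μ

/-- The Luxemburg norm of the variable exponent Lebesgue space `L^{p(·)}(μ)`. -/
noncomputable def eVNorm {Ω : Type*} [MeasurableSpace Ω] (μ : Measure Ω)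
    (p : Ω → ℝ≥0∞) {E : Type*} [NormedAddCommGroup E] (f : Ω → E) : ℝ :=
  sInf {lam : ℝ | 0 < lam ∧ eModular μ p f lam ≤ 1}

/-- Membership in the variable exponent Lebesgue space `L^{p(·)}(μ)`. -/
def MemEVLp {Ω : Type*} [MeasurableSpace Ω] (μ : Measure Ω)
    (p : Ω → ℝ≥0∞) {E : Type*} [NormedAddCommGroup E] (f : Ω → E) : Prop :=
  AEStronglyMeasurable f μ ∧ ∃ lam : ℝ, 0 < lam ∧ eModular μ p f lam ≤ 1

/-- The variable exponent sequence space norm `‖h‖_{ℓ^{q(·)}}`. -/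
noncomputable def eSeqNorm {I : Type*} (q : I → ℝ≥0∞) {E : Type*} [NormedAddCommGroup E]
    (h : I → E) : ℝ :=
  sInf {lam : ℝ | 0 < lam ∧ ∑' i, evpow (‖h i‖ / lam) (q i) ≤ 1}


namespace VLp

/-- modular with a real bounded exponent -/
noncomputable def md {Ω : Type*} [MeasurableSpace Ω] (μ : Measure Ω) (P : Ω → ℝ)
    (f : Ω → ℝ) (c : ℝ) : ℝ≥0∞ :=
  ∫⁻ x, ENNReal.ofReal (‖f x‖ / c) ^ (P x) ∂μ

lemma pointwise {q P η : ℝ} (hq : 1 ≤ q) (h1 : q ≤ P) (h2 : P ≤ q + η) (u : ℝ≥0∞) :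
    u ^ q ≤ u ^ P + ENNReal.ofReal η := by
  rcases le_total 1 u with hu | hu
  · exact (ENNReal.rpow_le_rpow_of_exponent_le hu h1).trans le_self_add
  have hη : 0 ≤ η := by linarith
  have hut : u ≠ ∞ := ne_top_of_le_ne_top one_ne_top hu
  rcases eq_or_ne u 0 with rfl | hu0
  · rw [ENNReal.zero_rpow_of_pos (by linarith)]; exact zero_le
  have key : u ^ q ≤ u ^ (q + η) + ENNReal.ofReal η := by
    lift u to NNReal using hut
    have ht1 : (u : ℝ) ≤ 1 := by exact_mod_cast hu
    have ht0 : 0 < (u : ℝ) := by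
      have : u ≠ 0 := by exact_mod_cast hu0
      positivity
    have hr : (u : ℝ) ^ q ≤ (u : ℝ) ^ (q + η) + η := by
      rw [Real.rpow_add ht0]
      have a1 : (u : ℝ) ^ q ≤ u := by
        simpa using Real.rpow_le_rpow_of_exponent_ge ht0 ht1 hq
      have a2 : 1 + η * Real.log u ≤ (u : ℝ) ^ η := by
        rw [Real.rpow_def_of_pos ht0]
        have := Real.add_one_le_exp (Real.log u * η)
        linarith
      have a3 : -1 ≤ (u : ℝ) * Real.log u := by
        have := Real.one_sub_inv_le_log_of_pos ht0
        have h3 : (u : ℝ) * (1 - (u : ℝ)⁻¹) ≤ u * Real.log u := by gcongr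
        have h4 : (u : ℝ) * (1 - (u : ℝ)⁻¹) = u - 1 := by field_simp
        linarith
      have a4 : (u : ℝ) ^ η ≤ 1 := Real.rpow_le_one ht0.le ht1 hη
      have a5 : 0 ≤ (u : ℝ) ^ q := by positivity
      have : (u : ℝ) ^ q * (1 - (u : ℝ) ^ η) ≤ u * (1 - (u : ℝ) ^ η) := by
        apply mul_le_mul_of_nonneg_right a1; linarith
      nlinarith
    have := ENNReal.ofReal_le_ofReal hr
    rw [ENNReal.ofReal_add (by positivity) hη, ← ENNReal.ofReal_rpow_of_pos ht0,
      ← ENNReal.ofReal_rpow_of_pos ht0] at this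
    simpa using this
  refine key.trans ?_
  gcongr ?_ + _
  exact ENNReal.rpow_le_rpow_of_exponent_ge hu h2

lemma jensen {Ω : Type*} [MeasurableSpace Ω] (ν : Measure Ω) [IsFiniteMeasure ν]
    (hν : ν Set.univ ≠ 0)
    {q : ℝ} (hq : 1 ≤ q) {u : Ω → ℝ≥0∞} (hu : AEMeasurable u ν) :
    ((∫⁻ x, u x ∂ν) / ν Set.univ) ^ q * ν Set.univ ≤ ∫⁻ x, u x ^ q ∂ν := by
  have h := eLpNorm'_le_eLpNorm'_mul_rpow_measure_univ (μ := ν) (f := u) (p := 1) (q := q)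
    one_pos hq hu.aestronglyMeasurable
  simp only [eLpNorm', enorm_eq_self, ENNReal.rpow_one, one_div, inv_one] at h
  have hq0 : 0 < q := by linarith
  set T := ν Set.univ
  have hT : T ≠ ∞ := measure_ne_top _ _
  have h2 := ENNReal.rpow_le_rpow h hq0.le
  rw [ENNReal.mul_rpow_of_nonneg _ _ hq0.le, ← ENNReal.rpow_mul, ← ENNReal.rpow_mul,
    inv_mul_cancel₀ hq0.ne', ENNReal.rpow_one, show (1 - q⁻¹) * q = q - 1 by field_simp] at h2
  rw [ENNReal.div_rpow_of_nonneg _ _ hq0.le]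
  calc (∫⁻ x, u x ∂ν) ^ q / T ^ q * T
      ≤ ((∫⁻ x, u x ^ q ∂ν) * T ^ (q - 1)) / T ^ q * T := by gcongr
    _ = (∫⁻ x, u x ^ q ∂ν) := by
      have : T ^ (q - 1) * T = T ^ q := by
        nth_rewrite 2 [← ENNReal.rpow_one T]
        rw [← ENNReal.rpow_add _ _ hν hT]; simp
      rw [ENNReal.div_eq_inv_mul, mul_assoc, mul_assoc, this, mul_comm, mul_assoc,
        ENNReal.mul_inv_cancel, mul_one]
      · simp [ENNReal.rpow_eq_zero_iff, hν, hT]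
      · exact ENNReal.rpow_ne_top_of_nonneg hq0.le hT

section
variable {Ω : Type*} [MeasurableSpace Ω] {μ : Measure Ω} {P : Ω → ℝ}

lemma md_anti (hP : ∀ x, 1 ≤ P x) (f : Ω → ℝ) {c d : ℝ} (hc : 0 < c) (h : c ≤ d) :
    md μ P f d ≤ md μ P f c := by
  unfold md
  refine lintegral_mono fun x => ?_
  have := hP x
  refine ENNReal.rpow_le_rpow ?_ (by linarith)
  gcongr

lemma md_mono (hP : ∀ x, 1 ≤ P x) {f g : Ω → ℝ} (hfg : ∀ x, ‖f x‖ ≤ ‖g x‖) {c : ℝ} (hc : 0 < c) :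
    md μ P f c ≤ md μ P g c := by
  unfold md
  refine lintegral_mono fun x => ?_
  have := hP x
  refine ENNReal.rpow_le_rpow ?_ (by linarith)
  have := hfg x
  gcongr

lemma md_aemeas (hPm : Measurable P) {f : Ω → ℝ} (hf : AEStronglyMeasurable f μ) (c : ℝ) :
    AEMeasurable (fun x => ENNReal.ofReal (‖f x‖ / c) ^ (P x)) μ := by
  have : AEMeasurable f μ := hf.aemeasurable
  exact AEMeasurable.pow (by fun_prop) hPm.aemeasurable

lemma md_two (hP : ∀ x, 1 ≤ P x) (f : Ω → ℝ) {c : ℝ} (hc : 0 < c) :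
    md μ P f (2 * c) ≤ 2⁻¹ * md μ P f c := by
  unfold md
  rw [← lintegral_const_mul' _ _ (by simp)]
  refine lintegral_mono fun x => ?_
  have hx := hP x
  have : ‖f x‖ / (2 * c) = 2⁻¹ * (‖f x‖ / c) := by field_simp
  rw [this, ENNReal.ofReal_mul (by norm_num), ENNReal.mul_rpow_of_nonneg _ _ (by linarith)]
  gcongr
  have h2 : ENNReal.ofReal 2⁻¹ = 2⁻¹ := by
    rw [ENNReal.ofReal_inv_of_pos (by norm_num)]; simp
  rw [h2]
  calc (2⁻¹ : ℝ≥0∞) ^ P x ≤ 2⁻¹ ^ (1 : ℝ) :=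
        ENNReal.rpow_le_rpow_of_exponent_ge (by simp) hx
    _ = 2⁻¹ := by simp

lemma md_add (hPm : Measurable P) (hP : ∀ x, 1 ≤ P x) {f g : Ω → ℝ}
    (hf : AEStronglyMeasurable f μ) {c : ℝ} (hc : 0 < c)
    (h1 : md μ P f c ≤ 1) (h2 : md μ P g c ≤ 1) : md μ P (f + g) (4 * c) ≤ 1 := by
  have h3 : md μ P (f + g) (2 * c) ≤ 2 := by
    calc md μ P (f + g) (2 * c)
        ≤ ∫⁻ x, (ENNReal.ofReal (‖f x‖ / c) ^ (P x) + ENNReal.ofReal (‖g x‖ / c) ^ (P x)) ∂μ := by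
          unfold md
          refine lintegral_mono fun x => ?_
          have hx := hP x
          have hn : ‖f x + g x‖ ≤ ‖f x‖ + ‖g x‖ := norm_add_le _ _
          rcases le_total ‖f x‖ ‖g x‖ with h | h
          · refine le_trans ?_ le_add_self
            refine ENNReal.rpow_le_rpow ?_ (by linarith)
            apply ENNReal.ofReal_le_ofReal
            rw [div_le_div_iff₀ (by positivity) hc]
            simp only [Pi.add_apply]
            nlinarith
          · refine le_trans ?_ le_self_add
            refine ENNReal.rpow_le_rpow ?_ (by linarith)
            apply ENNReal.ofReal_le_ofReal
            rw [div_le_div_iff₀ (by positivity) hc]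
            simp only [Pi.add_apply]
            nlinarith
      _ = md μ P f c + md μ P g c := lintegral_add_left' (md_aemeas hPm hf c) _
      _ ≤ 1 + 1 := add_le_add h1 h2
      _ = 2 := one_add_one_eq_two
  have h4 := md_two (μ := μ) hP (f + g) (c := 2 * c) (by positivity)
  rw [show 2 * (2 * c) = 4 * c by ring] at h4
  refine h4.trans ?_
  calc 2⁻¹ * md μ P (f + g) (2 * c) ≤ 2⁻¹ * 2 := by gcongr
    _ = 1 := ENNReal.inv_mul_cancel (by simp) (by simp)

lemma md_neg (f : Ω → ℝ) (c : ℝ) : md μ P (-f) c = md μ P f c := by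
  simp [md]

lemma md_smul (hP : ∀ x, 1 ≤ P x) (a : ℝ) (f : Ω → ℝ) {c : ℝ} (hc : 0 < c) :
    md μ P (a • f) ((|a| + 1) * c) ≤ md μ P f c := by
  unfold md
  refine lintegral_mono fun x => ?_
  have hx := hP x
  refine ENNReal.rpow_le_rpow ?_ (by linarith)
  apply ENNReal.ofReal_le_ofReal
  rw [div_le_div_iff₀ (by positivity) hc]
  simp only [Pi.smul_apply, smul_eq_mul, norm_mul, Real.norm_eq_abs]
  have : 0 ≤ |f x| * c := by positivity
  nlinarith

/-- finiteness at all scales -/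
lemma md_fin (hP : ∀ x, 1 ≤ P x) {C : ℝ} (hC : ∀ x, P x ≤ C) (f : Ω → ℝ) {c d : ℝ}
    (hc : 0 < c) (hd : 0 < d) (h1 : md μ P f c ≤ 1) : md μ P f d ≠ ∞ := by
  have hne : ENNReal.ofReal (c / d + 1) ^ C ≠ ∞ := by
    have : 0 < c / d := by positivity
    simp only [ne_eq, ENNReal.rpow_eq_top_iff, ENNReal.ofReal_eq_zero, ENNReal.ofReal_ne_top,
      false_and, or_false, not_and]
    intro h
    linarith
  have : md μ P f d ≤ ENNReal.ofReal (c / d + 1) ^ C * md μ P f c := by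
    unfold md
    rw [← lintegral_const_mul' _ _ hne]
    · refine lintegral_mono fun x => ?_
      have hx := hP x
      have h1 : (1 : ℝ≥0∞) ≤ ENNReal.ofReal (c / d + 1) := by
        rw [ENNReal.one_le_ofReal]; have : 0 < c / d := by positivity
        linarith
      calc ENNReal.ofReal (‖f x‖ / d) ^ P x
          ≤ (ENNReal.ofReal (c / d + 1) * ENNReal.ofReal (‖f x‖ / c)) ^ P x := by
            refine ENNReal.rpow_le_rpow ?_ (by linarith)
            rw [← ENNReal.ofReal_mul (by positivity)]
            apply ENNReal.ofReal_le_ofReal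
            have : (c / d + 1) * (‖f x‖ / c) = ‖f x‖ / d + ‖f x‖ / c := by field_simp
            rw [this]
            have : 0 ≤ ‖f x‖ / c := by positivity
            linarith
        _ = ENNReal.ofReal (c / d + 1) ^ P x * ENNReal.ofReal (‖f x‖ / c) ^ P x :=
            ENNReal.mul_rpow_of_nonneg _ _ (by linarith)
        _ ≤ _ := by
            gcongr
            exact hC x
  refine ne_top_of_le_ne_top ?_ this
  have := h1.trans_lt one_lt_top
  exact ENNReal.mul_ne_top hne this.ne

/-- density of simple functions -/
lemma dense [SigmaFinite μ] (hPm : Measurable P) (hP : ∀ x, 1 ≤ P x) {C : ℝ} (hC : ∀ x, P x ≤ C)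
    {g : Ω → ℝ} (hg : AEStronglyMeasurable g μ) {c δ : ℝ}
    (hc : 0 < c) (hδ : 0 < δ) (h1 : md μ P g c ≤ 1) :
    ∃ s : SimpleFunc Ω ℝ, μ (Function.support s) < ∞ ∧ md μ P (g - s) δ ≤ 1 := by
  obtain ⟨g', hg', hgg'⟩ := hg
  have hg'm := hg'.measurable
  let t : ℕ → SimpleFunc Ω ℝ := fun n =>
    (SimpleFunc.approxOn g' hg'm Set.univ 0 (Set.mem_univ _) n).restrict (spanningSets μ n)
  have htn : ∀ n x, t n x = (spanningSets μ n).indicator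
      (SimpleFunc.approxOn g' hg'm Set.univ 0 (Set.mem_univ _) n) x := fun n x => by
    simp only [t]
    rw [SimpleFunc.restrict_apply _ (measurableSet_spanningSets μ n)]
  have hfin : md μ P g' (δ / 3) ≠ ∞ := by
    have : md μ P g' c ≤ 1 := by
      convert h1 using 1
      unfold md
      refine lintegral_congr_ae ?_
      filter_upwards [hgg'] with x hx
      rw [hx]
    exact md_fin hP hC g' hc (by positivity) this
  have hlim : Tendsto (fun n => ∫⁻ x, ENNReal.ofReal (‖g' x - t n x‖ / δ) ^ P x ∂μ) atTop
      (𝓝 (∫⁻ _x, 0 ∂μ)) := by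
    refine tendsto_lintegral_of_dominated_convergence
      (fun x => ENNReal.ofReal (‖g' x‖ / (δ / 3)) ^ P x) ?_ ?_ hfin ?_
    · intro n
      have : Measurable (fun x => g' x - t n x) := hg'm.sub (t n).measurable
      exact Measurable.pow (by fun_prop) hPm
    · intro n
      refine Eventually.of_forall fun x => ?_
      have hx := hP x
      refine ENNReal.rpow_le_rpow ?_ (by linarith)
      apply ENNReal.ofReal_le_ofReal
      rw [div_le_div_iff₀ hδ (by positivity)]
      have h1 : ‖t n x‖ ≤ ‖g' x‖ + ‖g' x‖ := by
        rw [htn]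
        refine (norm_indicator_le_norm_self _ _).trans ?_
        exact SimpleFunc.norm_approxOn_zero_le hg'm (Set.mem_univ _) x n
      have h2 : ‖g' x - t n x‖ ≤ ‖g' x‖ + ‖t n x‖ := norm_sub_le _ _
      nlinarith
    · refine Eventually.of_forall fun x => ?_
      have hx := hP x
      have h0 : Tendsto (fun n => t n x) atTop (𝓝 (g' x)) := by
        have := SimpleFunc.tendsto_approxOn hg'm (Set.mem_univ (0 : ℝ)) (x := x) (by simp)
        refine this.congr' ?_
        filter_upwards [eventually_ge_atTop (spanningSetsIndex μ x)] with n hn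
        rw [htn, Set.indicator_of_mem]
        exact mem_spanningSets_of_index_le μ x hn
      have h2 : Tendsto (fun n => ENNReal.ofReal (‖g' x - t n x‖ / δ)) atTop (𝓝 0) := by
        have : Tendsto (fun n => ‖g' x - t n x‖ / δ) atTop (𝓝 (‖g' x - g' x‖ / δ)) :=
          ((tendsto_const_nhds.sub h0).norm).div_const δ
        have := ENNReal.tendsto_ofReal this
        simpa using this
      have h3 := (ENNReal.continuous_rpow_const (y := P x)).tendsto 0
      rw [ENNReal.zero_rpow_of_pos (by linarith)] at h3
      exact h3.comp h2
  rw [lintegral_zero] at hlim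
  obtain ⟨n, hn⟩ := (hlim.eventually (ge_mem_nhds (zero_lt_one))).exists
  refine ⟨t n, ?_, ?_⟩
  · refine lt_of_le_of_lt (measure_mono ?_) (measure_spanningSets_lt_top μ n)
    intro x hx
    by_contra h
    apply hx
    rw [htn, Set.indicator_of_notMem h]
  · refine le_of_eq_of_le ?_ hn
    unfold md
    refine lintegral_congr_ae ?_
    filter_upwards [hgg'] with x hx
    simp only [Pi.sub_apply]
    rw [hx]
end
end VLp

namespace VLp
section
variable {Ω : Type*} [MeasurableSpace Ω] {μ : Measure Ω} {P : Ω → ℝ}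

lemma le_one_add_rpow {r : ℝ} (hr : 1 ≤ r) (u : ℝ≥0∞) : u ≤ 1 + u ^ r := by
  rcases le_total u 1 with h | h
  · exact h.trans le_self_add
  · refine le_trans ?_ le_add_self
    simpa using ENNReal.rpow_le_rpow_of_exponent_le h hr

lemma cell (hP : ∀ x, 1 ≤ P x) {A : Set Ω} (hA : MeasurableSet A)
    (hAf : μ A ≠ ∞) {θ : ℝ≥0∞} (hθ : θ ≠ 0) (hθA : θ ≤ μ A) {q η : ℝ} (hq : 1 ≤ q) (hη : 0 ≤ η)
    (hqP : ∀ x ∈ A, q ≤ P x ∧ P x ≤ q + η) {u : Ω → ℝ≥0∞} (hu : AEMeasurable u μ)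
    (hu1 : ∫⁻ x in A, u x ^ P x ∂μ ≤ 1) :
    ∫⁻ x in A, ((∫⁻ y in A, u y ∂μ) / μ A) ^ P x ∂μ ≤
      (1 + θ⁻¹) ^ η * ((∫⁻ x in A, u x ^ P x ∂μ) + ENNReal.ofReal η * μ A) := by
  have hA0 : μ A ≠ 0 := fun h => hθ (by simpa [h] using hθA)
  set m := (∫⁻ y in A, u y ∂μ) / μ A with hm
  have hm1 : m ≤ 1 + θ⁻¹ := by
    have : ∫⁻ y in A, u y ∂μ ≤ μ A + 1 := by
      calc ∫⁻ y in A, u y ∂μ ≤ ∫⁻ y in A, (1 + u y ^ P y) ∂μ :=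
            lintegral_mono fun y => le_one_add_rpow (hP y) (u y)
        _ = μ A + ∫⁻ y in A, u y ^ P y ∂μ := by
            rw [lintegral_add_left measurable_const]; simp
        _ ≤ _ := by gcongr
    calc m ≤ (μ A + 1) / μ A := by rw [hm]; gcongr
      _ = 1 + (μ A)⁻¹ := by
        rw [ENNReal.add_div, ENNReal.div_self hA0 hAf, one_div]
      _ ≤ _ := by gcongr
  have hJ : m ^ q * μ A ≤ ∫⁻ x in A, u x ^ q ∂μ := by
    have : IsFiniteMeasure (μ.restrict A) := ⟨by simpa using hAf.lt_top⟩
    have := jensen (μ.restrict A) (by simpa using hA0) hq hu.restrict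
    simpa using this
  have hpt : ∀ x ∈ A, m ^ P x ≤ (1 + θ⁻¹) ^ η * m ^ q := by
    intro x hx
    obtain ⟨h1, h2⟩ := hqP x hx
    rcases le_total m 1 with h | h
    · calc m ^ P x ≤ m ^ q := ENNReal.rpow_le_rpow_of_exponent_ge h h1
        _ ≤ _ := le_mul_of_one_le_left' (by simpa using ENNReal.rpow_le_rpow (le_self_add : (1 : ℝ≥0∞) ≤ 1 + θ⁻¹) hη)
    · calc m ^ P x ≤ m ^ (η + q) := ENNReal.rpow_le_rpow_of_exponent_le h (by linarith)
        _ = m ^ η * m ^ q := by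
          rw [ENNReal.rpow_add_of_nonneg _ _ hη (by linarith)]
        _ ≤ _ := by gcongr
  calc ∫⁻ x in A, m ^ P x ∂μ ≤ ∫⁻ x in A, (1 + θ⁻¹) ^ η * m ^ q ∂μ :=
        setLIntegral_mono' hA hpt
    _ = (1 + θ⁻¹) ^ η * (m ^ q * μ A) := by simp [mul_assoc]
    _ ≤ (1 + θ⁻¹) ^ η * ∫⁻ x in A, u x ^ q ∂μ := by gcongr
    _ ≤ (1 + θ⁻¹) ^ η * ∫⁻ x in A, (u x ^ P x + ENNReal.ofReal η) ∂μ := by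
        refine mul_le_mul_right ?_ _
        refine setLIntegral_mono' hA fun x hx => ?_
        exact pointwise hq (hqP x hx).1 (hqP x hx).2 _
    _ = _ := by
        rw [lintegral_add_right _ measurable_const]; simp

/-- averaging operator -/
noncomputable def op {Λ : Type*} (μ : Measure Ω) (J : Finset Λ) (A : Λ → Set Ω) (f : Ω → ℝ) :
    Ω → ℝ := fun x =>
  ∑ l ∈ J, ((μ.real (A l))⁻¹ * ∫ y in A l, f y ∂μ) * (A l).indicator 1 x

lemma op_of_mem {Λ : Type*} {J : Finset Λ} {A : Λ → Set Ω}
    (hd : ∀ l l' x, x ∈ A l → x ∈ A l' → l = l') (f : Ω → ℝ) {l : Λ} (hl : l ∈ J) {x : Ω}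
    (hx : x ∈ A l) : op μ J A f x = (μ.real (A l))⁻¹ * ∫ y in A l, f y ∂μ := by
  unfold op
  rw [Finset.sum_eq_single l]
  · simp [hx]
  · intro b _ hbl
    have : x ∉ A b := fun h => hbl (hd _ _ _ h hx)
    simp [this]
  · intro h; exact absurd hl h

lemma op_of_not {Λ : Type*} {J : Finset Λ} {A : Λ → Set Ω}
    (f : Ω → ℝ) {x : Ω}
    (hx : ∀ l ∈ J, x ∉ A l) : op μ J A f x = 0 := by
  unfold op
  refine Finset.sum_eq_zero fun l hl => ?_
  simp [hx l hl]

lemma op_bound {Λ : Type*} {J : Finset Λ} {A : Λ → Set Ω}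
    (hPm : Measurable P) (hP : ∀ x, 1 ≤ P x)
    (hd : ∀ l l' x, x ∈ A l → x ∈ A l' → l = l')
    (hA : ∀ l, MeasurableSet (A l)) (hAf : ∀ l, μ (A l) ≠ ∞)
    {θ : ℝ≥0∞} (hθ : θ ≠ 0) (hθA : ∀ l ∈ J, θ ≤ μ (A l)) {η : ℝ} (hη : 0 ≤ η)
    (q : Λ → ℝ) (hq : ∀ l, 1 ≤ q l)
    (hqP : ∀ l, ∀ x ∈ A l, q l ≤ P x ∧ P x ≤ q l + η)
    {T : ℝ≥0∞} (hT : μ (⋃ l ∈ J, A l) ≤ T)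
    (hbd : (1 + θ⁻¹) ^ η * (1 + ENNReal.ofReal η * T) ≤ 2)
    {f : Ω → ℝ} (hf : AEStronglyMeasurable f μ) {c : ℝ} (hc : 0 < c) (h1 : md μ P f c ≤ 1) :
    md μ P (op μ J A f) (2 * c) ≤ 1 := by
  set u : Ω → ℝ≥0∞ := fun x => ENNReal.ofReal (‖f x‖ / c) with hu
  have hum : AEMeasurable u μ := by
    have : AEMeasurable f μ := hf.aemeasurable
    fun_prop
  have hpd : ((J : Finset Λ) : Set Λ).PairwiseDisjoint A := by
    intro l _ l' _ hne
    refine Set.disjoint_left.2 fun x hx hx' => hne (hd _ _ _ hx hx')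
  have hmain : md μ P (op μ J A f) c ≤ 2 := by
    have hpt : ∀ x, ENNReal.ofReal (‖op μ J A f x‖ / c) ^ P x ≤
        ∑ l ∈ J, (A l).indicator (fun x => ((∫⁻ y in A l, u y ∂μ) / μ (A l)) ^ P x) x := by
      intro x
      have hx := hP x
      by_cases h : ∃ l ∈ J, x ∈ A l
      · obtain ⟨l, hl, hxl⟩ := h
        refine le_trans ?_ (Finset.single_le_sum (f := fun l => (A l).indicator
          (fun x => ((∫⁻ y in A l, u y ∂μ) / μ (A l)) ^ P x) x) (fun _ _ => zero_le) hl)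
        simp only [Set.indicator_of_mem hxl]
        refine ENNReal.rpow_le_rpow ?_ (by linarith)
        rw [op_of_mem hd f hl hxl]
        have hA0 : μ (A l) ≠ 0 := fun h => hθ (by simpa [h] using hθA l hl)
        have hr : 0 < μ.real (A l) := ENNReal.toReal_pos hA0 (hAf l)
        have e1 : ‖(μ.real (A l))⁻¹ * ∫ y in A l, f y ∂μ‖ / c
            = ‖∫ y in A l, f y / c ∂μ‖ / μ.real (A l) := by
          rw [integral_div, norm_mul, norm_div, norm_inv, Real.norm_of_nonneg hr.le,
            Real.norm_of_nonneg hc.le]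
          field_simp
        rw [e1, ENNReal.ofReal_div_of_pos hr]
        have e2 : ENNReal.ofReal (μ.real (A l)) = μ (A l) := ENNReal.ofReal_toReal (hAf l)
        rw [e2]
        gcongr
        rw [ofReal_norm]
        refine (enorm_integral_le_lintegral_enorm _).trans ?_
        refine lintegral_mono fun y => ?_
        rw [← ofReal_norm, norm_div, Real.norm_of_nonneg hc.le]
      · push Not at h
        rw [op_of_not f h]
        simp only [norm_zero, zero_div, ENNReal.ofReal_zero]
        rw [ENNReal.zero_rpow_of_pos (by linarith)]
        exact zero_le
    have hsum : ∑ l ∈ J, ∫⁻ x in A l, u x ^ P x ∂μ ≤ 1 := by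
      rw [← lintegral_biUnion_finset hpd (fun l _ => hA l)]
      exact (setLIntegral_le_lintegral _ _).trans h1
    calc md μ P (op μ J A f) c ≤ ∫⁻ x, ∑ l ∈ J, (A l).indicator
            (fun x => ((∫⁻ y in A l, u y ∂μ) / μ (A l)) ^ P x) x ∂μ := lintegral_mono hpt
      _ = ∑ l ∈ J, ∫⁻ x in A l, ((∫⁻ y in A l, u y ∂μ) / μ (A l)) ^ P x ∂μ := by
          rw [lintegral_finsetSum]
          · refine Finset.sum_congr rfl fun l _ => ?_
            rw [lintegral_indicator (hA l)]
          · intro l _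
            exact (Measurable.pow measurable_const hPm).indicator (hA l)
      _ ≤ ∑ l ∈ J, (1 + θ⁻¹) ^ η *
            ((∫⁻ x in A l, u x ^ P x ∂μ) + ENNReal.ofReal η * μ (A l)) := by
          refine Finset.sum_le_sum fun l hl => ?_
          refine cell hP (hA l) (hAf l) hθ (hθA l hl) (hq l) hη (hqP l) hum ?_
          exact (setLIntegral_le_lintegral _ _).trans h1
      _ = (1 + θ⁻¹) ^ η * ((∑ l ∈ J, ∫⁻ x in A l, u x ^ P x ∂μ) +
            ENNReal.ofReal η * μ (⋃ l ∈ J, A l)) := by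
          rw [measure_biUnion_finset hpd (fun l _ => hA l), ← Finset.mul_sum,
            Finset.sum_add_distrib, ← Finset.mul_sum]
      _ ≤ (1 + θ⁻¹) ^ η * (1 + ENNReal.ofReal η * T) := by gcongr
      _ ≤ 2 := hbd
  refine (md_two hP _ hc).trans ?_
  calc 2⁻¹ * md μ P (op μ J A f) c ≤ 2⁻¹ * 2 := by gcongr
    _ = 1 := ENNReal.inv_mul_cancel (by simp) (by simp)

lemma op_meas {Λ : Type*} (J : Finset Λ) {A : Λ → Set Ω} (hA : ∀ l, MeasurableSet (A l))
    (f : Ω → ℝ) : Measurable (op μ J A f) := by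
  unfold op
  refine Finset.measurable_sum _ fun l _ => ?_
  exact measurable_const.mul (measurable_one.indicator (hA l))

lemma integrableOn (hP : ∀ x, 1 ≤ P x) {A : Set Ω} (hAf : μ A ≠ ∞)
    {f : Ω → ℝ} (hf : AEStronglyMeasurable f μ) {c : ℝ} (hc : 0 < c) (h1 : md μ P f c ≤ 1) :
    IntegrableOn f A μ := by
  have h : IntegrableOn (fun x => f x / c) A μ := by
    refine ⟨(hf.aemeasurable.div_const c).aestronglyMeasurable.restrict, ?_⟩
    have : ∫⁻ y in A, ‖f y / c‖ₑ ∂μ ≤ μ A + 1 := by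
      calc ∫⁻ y in A, ‖f y / c‖ₑ ∂μ
          ≤ ∫⁻ y in A, (1 + ENNReal.ofReal (‖f y‖ / c) ^ P y) ∂μ :=
            lintegral_mono fun y => by
              rw [← ofReal_norm, norm_div, Real.norm_of_nonneg hc.le]
              exact le_one_add_rpow (hP y) _
        _ = μ A + ∫⁻ y in A, ENNReal.ofReal (‖f y‖ / c) ^ P y ∂μ := by
            rw [lintegral_add_left measurable_const]; simp
        _ ≤ _ := by
            gcongr
            exact (setLIntegral_le_lintegral _ _).trans h1
    exact this.trans_lt (by simp [hAf.lt_top])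
  have := h.mul_const c
  refine this.congr (Eventually.of_forall fun x => ?_)
  simp only
  field_simp

/-- the numerical choice of the mesh -/
lemma exists_mesh (T : ℝ≥0∞) (hT : T ≠ ∞) (R : ℝ≥0∞) (hR : R ≠ ∞) (M N : ℕ) :
    ∃ n : ℕ, 0 < n ∧ (1 + (((n : ℝ≥0∞) ^ 2)⁻¹)⁻¹) ^ ((n : ℝ)⁻¹) *
      (1 + ENNReal.ofReal ((n : ℝ)⁻¹) * T) ≤ 2 ∧
      R * ((M * (n * N + 1) : ℕ) * ((n : ℝ≥0∞) ^ 2)⁻¹) ≤ 1 := by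
  have hn : Tendsto (fun n : ℕ => (n : ℝ)) atTop atTop := tendsto_natCast_atTop_atTop
  have hi : Tendsto (fun n : ℕ => (n : ℝ)⁻¹) atTop (𝓝 0) := tendsto_inv_atTop_zero.comp hn
  lift T to NNReal using hT
  lift R to NNReal using hR
  have h1 : Tendsto (fun n : ℕ => ((n : ℝ) ^ 3) ^ ((n : ℝ)⁻¹) * (1 + (n : ℝ)⁻¹ * T)) atTop
      (𝓝 (1 * (1 + 0 * (T : ℝ)))) := by
    refine Tendsto.mul ?_ (tendsto_const_nhds.add (hi.mul_const _))
    have := ((tendsto_rpow_div.comp hn).pow 3)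
    rw [one_pow] at this
    refine this.congr fun n => ?_
    simp only [Function.comp]
    rw [← Real.rpow_natCast, ← Real.rpow_mul (by positivity), ← Real.rpow_natCast,
      ← Real.rpow_mul (by positivity), one_div, mul_comm]
  have h2 : Tendsto (fun n : ℕ => (R : ℝ) * (M * ((n : ℝ)⁻¹ * N + (n : ℝ)⁻¹ * (n : ℝ)⁻¹))) atTop
      (𝓝 ((R : ℝ) * (M * (0 * N + 0 * 0)))) :=
    (((hi.mul_const _).add (hi.mul hi)).const_mul _).const_mul _
  have e1 := h1.eventually (ge_mem_nhds (by norm_num : 1 * (1 + 0 * (T : ℝ)) < 2))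
  have e2 := h2.eventually (ge_mem_nhds (by norm_num : (R : ℝ) * (M * (0 * N + 0 * 0)) < 1))
  obtain ⟨n, a1, a2, a3⟩ := (e1.and (e2.and (eventually_ge_atTop 2))).exists
  have hn0 : (0 : ℝ) < n := by exact_mod_cast (by omega : 0 < n)
  refine ⟨n, by omega, ?_, ?_⟩
  · have hb := ENNReal.ofReal_le_ofReal a1
    rw [ENNReal.ofReal_mul (by positivity), ← ENNReal.ofReal_rpow_of_pos (by positivity),
      ENNReal.ofReal_add (by norm_num) (by positivity), ENNReal.ofReal_mul (by positivity)] at hb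
    simp only [ENNReal.ofReal_one, ENNReal.ofReal_coe_nnreal, ENNReal.ofReal_ofNat] at hb
    refine le_trans ?_ hb
    gcongr
    rw [inv_inv, ENNReal.ofReal_pow hn0.le, ENNReal.ofReal_natCast]
    have : 1 + n ^ 2 ≤ n ^ 3 := by nlinarith [Nat.pow_le_pow_left a3 2]
    exact_mod_cast this
  · have hb := ENNReal.ofReal_le_ofReal a2
    rw [ENNReal.ofReal_one] at hb
    refine le_trans (le_of_eq ?_) hb
    have : (R : ℝ) * (M * ((n : ℝ)⁻¹ * N + (n : ℝ)⁻¹ * (n : ℝ)⁻¹)) =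
      (R : ℝ) * (((M * (n * N + 1) : ℕ) : ℝ) * ((n : ℝ) ^ 2)⁻¹) := by
      push_cast; field_simp
    rw [this, ENNReal.ofReal_mul (by positivity), ENNReal.ofReal_mul (by positivity),
      ENNReal.ofReal_natCast, ENNReal.ofReal_inv_of_pos (by positivity),
      ENNReal.ofReal_pow hn0.le, ENNReal.ofReal_natCast, ENNReal.ofReal_coe_nnreal]

end
end VLp

namespace VLp
section
variable {Ω : Type*} [MeasurableSpace Ω] {μ : Measure Ω} {P : Ω → ℝ}

lemma core (hPm : Measurable P) (hP : ∀ x, 1 ≤ P x) {C : ℕ} (hC : ∀ x, P x ≤ C)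
    {ι : Type*} [Fintype ι] (s : ι → SimpleFunc Ω ℝ)
    (hs : ∀ i, μ (Function.support (s i)) < ∞) {δ : ℝ} (hδ : 0 < δ) :
    ∃ (J : Finset ((ι → ℝ) × ℕ)) (A : (ι → ℝ) × ℕ → Set Ω),
      (∀ l, MeasurableSet (A l)) ∧ (∀ l, μ (A l) ≠ ∞) ∧
      (∀ (f : Ω → ℝ) (c : ℝ), AEStronglyMeasurable f μ → 0 < c → md μ P f c ≤ 1 →
        md μ P (op μ J A f) (2 * c) ≤ 1) ∧
      ∀ i, md μ P (s i - op μ J A (s i)) δ ≤ 1 := by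
  classical
  have hbound : ∃ H : ℝ, 0 ≤ H ∧ ∀ i x, ‖s i x‖ ≤ H := by
    choose h hh using fun i => (s i).exists_forall_norm_le
    refine ⟨∑ i, |h i|, by positivity, fun i x => (hh i x).trans ((le_abs_self _).trans ?_)⟩
    exact Finset.single_le_sum (f := fun i => |h i|) (fun _ _ => abs_nonneg _) (Finset.mem_univ i)
  obtain ⟨H, hH0, hH⟩ := hbound
  set B : Set Ω := ⋃ i, Function.support (s i) with hB
  have hBm : MeasurableSet B := MeasurableSet.iUnion fun i => (s i).measurableSet_support
  have hBf : μ B ≠ ∞ := by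
    refine ne_top_of_le_ne_top ?_ (measure_iUnion_fintype_le μ _)
    exact (ENNReal.sum_lt_top.2 fun i _ => hs i).ne
  set R : ℝ≥0∞ := ENNReal.ofReal (H / δ + 1) ^ (C : ℝ) with hR
  have hRt : R ≠ ∞ := ENNReal.rpow_ne_top_of_nonneg (by positivity) ENNReal.ofReal_ne_top
  set J0 : Finset (ι → ℝ) := (Set.Finite.pi (fun i => (s i).finite_range)).toFinset with hJ0
  obtain ⟨n, hn, hn1, hn2⟩ := exists_mesh (μ B) hBf R hRt J0.card C
  have hnr : (0 : ℝ) < n := by exact_mod_cast hn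
  set θ : ℝ≥0∞ := ((n : ℝ≥0∞) ^ 2)⁻¹ with hθ
  have hθ0 : θ ≠ 0 := by simp [hθ]
  let lab : Ω → (ι → ℝ) × ℕ := fun x => (fun i => s i x, ⌊n * P x⌋₊)
  have hlab : Measurable lab := by
    refine Measurable.prodMk (measurable_pi_lambda _ fun i => (s i).measurable) ?_
    exact Nat.measurable_floor.comp (measurable_const.mul hPm)
  let A : (ι → ℝ) × ℕ → Set Ω := fun l => B ∩ Set.preimage lab {l}
  have hA : ∀ l, MeasurableSet (A l) := fun l => hBm.inter (hlab (measurableSet_singleton l))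
  have hAB : ∀ l, A l ⊆ B := fun l => Set.inter_subset_left
  have hAf : ∀ l, μ (A l) ≠ ∞ := fun l => ne_top_of_le_ne_top hBf (measure_mono (hAB l))
  have hd : ∀ l l' x, x ∈ A l → x ∈ A l' → l = l' := by
    intro l l' x hx hx'
    exact (hx.2 : lab x = l).symm.trans hx'.2
  let Jall : Finset ((ι → ℝ) × ℕ) := J0 ×ˢ Finset.range (n * C + 1)
  have hlabJ : ∀ x, lab x ∈ Jall := by
    intro x
    simp only [Jall, lab, Finset.mem_product, Finset.mem_range, hJ0, Set.Finite.mem_toFinset,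
      Set.mem_univ_pi]
    refine ⟨fun i => Set.mem_range_self x, ?_⟩
    rw [Nat.lt_succ_iff]
    apply Nat.floor_le_of_le
    push_cast
    have := hC x
    gcongr
  let J := Jall.filter (fun l => θ ≤ μ (A l))
  let D : Set Ω := ⋃ l ∈ Jall.filter (fun l => ¬ θ ≤ μ (A l)), A l
  have hDm : MeasurableSet D := Finset.measurableSet_biUnion _ fun l _ => hA l
  have hD : μ D ≤ (J0.card * (n * C + 1) : ℕ) * θ := by
    calc μ D ≤ ∑ l ∈ Jall.filter (fun l => ¬ θ ≤ μ (A l)), μ (A l) :=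
          measure_biUnion_finset_le _ _
      _ ≤ ∑ l ∈ Jall.filter (fun l => ¬ θ ≤ μ (A l)), θ := by
          refine Finset.sum_le_sum fun l hl => ?_
          exact (not_le.1 (Finset.mem_filter.1 hl).2).le
      _ ≤ ∑ l ∈ Jall, θ := Finset.sum_le_sum_of_subset (Finset.filter_subset _ _)
      _ = _ := by
          rw [Finset.sum_const, nsmul_eq_mul, Finset.card_product, Finset.card_range]
  refine ⟨J, A, hA, hAf, ?_, ?_⟩
  · intro f c hf hc h1
    refine op_bound hPm hP hd hA hAf hθ0 (fun l hl => (Finset.mem_filter.1 hl).2)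
      (η := (n : ℝ)⁻¹) (by positivity) (fun l => max 1 (l.2 / n)) (fun l => le_max_left _ _) ?_
      (T := μ B) (measure_mono (Set.iUnion₂_subset fun l _ => hAB l)) hn1 hf hc h1
    intro l x hx
    have hl : lab x = l := hx.2
    have hl2 : ⌊n * P x⌋₊ = l.2 := by rw [← hl]
    have hPx := hP x
    have f1 : (l.2 : ℝ) ≤ n * P x := by rw [← hl2]; exact Nat.floor_le (by positivity)
    have f2 : n * P x < l.2 + 1 := by rw [← hl2]; exact Nat.lt_floor_add_one _
    refine ⟨max_le hPx ?_, ?_⟩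
    · rw [div_le_iff₀ hnr]; linarith
    · refine le_trans ?_ (add_le_add_left (le_max_right _ _) _)
      rw [inv_eq_one_div, ← add_div, le_div_iff₀ hnr]; linarith
  · intro i
    have hpt : ∀ x, ENNReal.ofReal (‖(s i - op μ J A (s i) : Ω → ℝ) x‖ / δ) ^ P x ≤
        D.indicator (fun _ => R) x := by
      intro x
      have hPx := hP x
      have hz : (s i - op μ J A (s i) : Ω → ℝ) x = 0 →
          ENNReal.ofReal (‖(s i - op μ J A (s i) : Ω → ℝ) x‖ / δ) ^ P x ≤
            D.indicator (fun _ => R) x := by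
        intro h0
        rw [h0]
        simp only [norm_zero, zero_div, ENNReal.ofReal_zero]
        rw [ENNReal.zero_rpow_of_pos (by linarith)]
        exact zero_le
      by_cases hxB : x ∈ B
      · have hxA : x ∈ A (lab x) := ⟨hxB, rfl⟩
        by_cases hg : θ ≤ μ (A (lab x))
        · apply hz
          have hJ : lab x ∈ J := Finset.mem_filter.2 ⟨hlabJ x, hg⟩
          simp only [Pi.sub_apply]
          rw [op_of_mem hd (s i) hJ hxA]
          have : ∫ y in A (lab x), s i y ∂μ = ∫ y in A (lab x), s i x ∂μ := by
            refine setIntegral_congr_fun (hA _) fun y hy => ?_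
            have hy2 : lab y = lab x := hy.2
            exact congrFun (congrArg Prod.fst hy2) i
          rw [this, setIntegral_const, smul_eq_mul]
          have hA0 : μ (A (lab x)) ≠ 0 := fun h => hθ0 (by simpa [h] using hg)
          have hr : 0 < μ.real (A (lab x)) := ENNReal.toReal_pos hA0 (hAf _)
          field_simp
          simp
        · have hxD : x ∈ D := by
            simp only [D, Set.mem_iUnion]
            exact ⟨lab x, Finset.mem_filter.2 ⟨hlabJ x, hg⟩, hxA⟩
          rw [Set.indicator_of_mem hxD]
          have h0 : op μ J A (s i) x = 0 := by
            refine op_of_not _ fun l hl hx => hg ?_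
            rw [← hd _ _ _ hx hxA]
            exact (Finset.mem_filter.1 hl).2
          simp only [Pi.sub_apply, h0, sub_zero]
          calc ENNReal.ofReal (‖s i x‖ / δ) ^ P x ≤ ENNReal.ofReal (H / δ + 1) ^ P x := by
                refine ENNReal.rpow_le_rpow ?_ (by linarith)
                apply ENNReal.ofReal_le_ofReal
                have : ‖s i x‖ / δ ≤ H / δ := by have := hH i x; gcongr
                linarith
            _ ≤ R := by
                refine ENNReal.rpow_le_rpow_of_exponent_le ?_ (hC x)
                rw [ENNReal.one_le_ofReal]
                have : 0 ≤ H / δ := by positivity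
                linarith
      · apply hz
        have h1 : s i x = 0 := by
          by_contra h
          exact hxB (Set.mem_iUnion.2 ⟨i, h⟩)
        have h2 : op μ J A (s i) x = 0 := op_of_not _ fun l _ hx => hxB (hAB l hx)
        simp [h1, h2]
    calc md μ P (s i - op μ J A (s i)) δ ≤ ∫⁻ x, D.indicator (fun _ => R) x ∂μ :=
          lintegral_mono hpt
      _ = R * μ D := by rw [lintegral_indicator hDm]; simp
      _ ≤ R * ((J0.card * (n * C + 1) : ℕ) * θ) := by gcongr
      _ ≤ 1 := hn2

/-- the variable exponent space as a submodule -/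
def sp (μ : Measure Ω) (P : Ω → ℝ) (hPm : Measurable P) (hP : ∀ x, 1 ≤ P x) :
    Submodule ℝ (Ω → ℝ) where
  carrier := {f | AEStronglyMeasurable f μ ∧ ∃ c : ℝ, 0 < c ∧ md μ P f c ≤ 1}
  zero_mem' := by
    refine ⟨aestronglyMeasurable_zero, 1, one_pos, ?_⟩
    unfold md
    have : ∀ x, (0 : ℝ≥0∞) ^ P x = 0 := fun x =>
      ENNReal.zero_rpow_of_pos (by linarith [hP x])
    simp [this]
  add_mem' := by
    rintro f g ⟨hf, c, hc, h1⟩ ⟨hg, d, hd, h2⟩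
    refine ⟨hf.add hg, 4 * max c d, by positivity, ?_⟩
    refine md_add hPm hP hf (by positivity) ?_ ?_
    · exact (md_anti hP f hc (le_max_left _ _)).trans h1
    · exact (md_anti hP g hd (le_max_right _ _)).trans h2
  smul_mem' := by
    rintro a f ⟨hf, c, hc, h1⟩
    exact ⟨hf.const_smul a, (|a| + 1) * c, by positivity, (md_smul hP a f hc).trans h1⟩

lemma exists_lin (hPm : Measurable P) (hP : ∀ x, 1 ≤ P x) {Λ : Type*} (J : Finset Λ)
    (A : Λ → Set Ω) (hAf : ∀ l, μ (A l) ≠ ∞) :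
    ∃ F : (Ω → ℝ) →ₗ[ℝ] (Ω → ℝ), FiniteDimensional ℝ (LinearMap.range F) ∧
      ∀ f ∈ sp μ P hPm hP, F f = op μ J A f := by
  let W : Submodule ℝ (Ω → ℝ) := Submodule.span ℝ
    (Set.image (fun l => (A l).indicator (1 : Ω → ℝ)) (J : Set Λ))
  have hW : FiniteDimensional ℝ W :=
    FiniteDimensional.span_of_finite ℝ (J.finite_toSet.image _)
  have hop : ∀ f, op μ J A f ∈ W := by
    intro f
    have : op μ J A f = ∑ l ∈ J, ((μ.real (A l))⁻¹ * ∫ y in A l, f y ∂μ) •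
        (A l).indicator (1 : Ω → ℝ) := by
      ext x
      simp [op, Finset.sum_apply]
    rw [this]
    exact Submodule.sum_mem _ fun l hl => Submodule.smul_mem _ _
      (Submodule.subset_span ⟨l, hl, rfl⟩)
  have hint : ∀ f ∈ sp μ P hPm hP, ∀ l, IntegrableOn f (A l) μ := by
    rintro f ⟨hf, c, hc, h1⟩ l
    exact integrableOn hP (hAf l) hf hc h1
  let G : sp μ P hPm hP →ₗ[ℝ] W :=
    { toFun := fun f => ⟨op μ J A f, hop f⟩
      map_add' := by
        rintro ⟨f, hf⟩ ⟨g, hg⟩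
        ext x
        simp only [op, Submodule.coe_add, Pi.add_apply]
        rw [← Finset.sum_add_distrib]
        refine Finset.sum_congr rfl fun l _ => ?_
        rw [integral_add (hint f hf l) (hint g hg l)]
        ring
      map_smul' := by
        rintro a ⟨f, hf⟩
        ext x
        simp only [op, Submodule.coe_smul, Pi.smul_apply, smul_eq_mul, RingHom.id_apply]
        rw [Finset.mul_sum]
        refine Finset.sum_congr rfl fun l _ => ?_
        rw [integral_const_mul]
        ring }
  obtain ⟨F, hF⟩ := LinearMap.exists_extend G
  refine ⟨W.subtype ∘ₗ F, ?_, ?_⟩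
  · have : LinearMap.range (W.subtype ∘ₗ F) ≤ W := by
      rintro _ ⟨f, rfl⟩
      exact (F f).2
    exact Submodule.finiteDimensional_of_le this
  · intro f hf
    have := LinearMap.congr_fun hF ⟨f, hf⟩
    simp only [LinearMap.comp_apply, Submodule.subtype_apply] at this ⊢
    rw [this]
    rfl

end
end VLp

/-- The bounded approximation property (with constant 2) of the variable exponent Lebesgue
space `L^{p(·)}(μ)` for a σ-finite complete measure `μ` and a bounded exponent `p`.
Compactness of `K ⊆ L^{p(·)}(μ)` is expressed as sequential compactness with respect to the
Luxemburg norm, and `‖F‖ ≤ 2` as `‖F f‖_{p(·)} ≤ 2 ‖f‖_{p(·)}` for all `f`. -/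
theorem variable_Lp_bounded_approximation_property
    {Ω : Type*} [MeasurableSpace Ω] (μ : Measure Ω) [SigmaFinite μ]
    (hcomp : μ.IsComplete)
    (p : Ω → ℝ≥0∞) (hpm : Measurable p) (hp1 : ∀ x, 1 ≤ p x)
    (hpbdd : ∃ C : ℝ≥0∞, C < ⊤ ∧ ∀ᵐ x ∂μ, p x ≤ C)
    (K : Set (Ω → ℝ)) (hKmem : ∀ f ∈ K, MemEVLp μ p f)
    (hKcompact : ∀ f : ℕ → Ω → ℝ, (∀ n, f n ∈ K) →
      ∃ g ∈ K, ∃ φ : ℕ → ℕ, StrictMono φ ∧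
        Filter.Tendsto (fun n => eVNorm μ p (f (φ n) - g)) Filter.atTop (nhds 0))
    (ε : ℝ) (hε : 0 < ε) :
    ∃ F : (Ω → ℝ) →ₗ[ℝ] (Ω → ℝ),
      FiniteDimensional ℝ (LinearMap.range F) ∧
      (∀ f : Ω → ℝ, MemEVLp μ p f → MemEVLp μ p (F f) ∧ eVNorm μ p (F f) ≤ 2 * eVNorm μ p f) ∧
      (∀ f ∈ K, eVNorm μ p (f - F f) < ε) := by
  classical
  obtain ⟨C0, hC0, hpC0⟩ := hpbdd
  obtain ⟨C1, hC1⟩ := ENNReal.exists_nat_gt hC0.ne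
  -- a real-valued exponent that agrees with `p` almost everywhere
  let C : ℕ := C1 + 1
  let P : Ω → ℝ := fun x => (min (p x) C).toReal
  have hmt : ∀ x, min (p x) (C : ℝ≥0∞) ≠ ∞ := fun x =>
    ne_top_of_le_ne_top (ENNReal.natCast_ne_top C) (min_le_right _ _)
  have hPm : Measurable P := (hpm.min measurable_const).ennreal_toReal
  have hP : ∀ x, 1 ≤ P x := by
    intro x
    have : (1 : ℝ≥0∞) ≤ min (p x) C := le_min (hp1 x) (by simp [C])
    simpa using ENNReal.toReal_mono (hmt x) this
  have hC : ∀ x, P x ≤ C := by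
    intro x
    simpa using ENNReal.toReal_mono (ENNReal.natCast_ne_top C) (min_le_right (p x) (C : ℝ≥0∞))
  have hmod : ∀ (f : Ω → ℝ) (c : ℝ), eModular μ p f c = VLp.md μ P f c := by
    intro f c
    unfold eModular VLp.md
    refine lintegral_congr_ae ?_
    filter_upwards [hpC0] with x hx
    have h1 : p x ≤ C := hx.trans (hC1.le.trans (by simp [C]))
    have h2 : p x ≠ ∞ := ne_top_of_le_ne_top (ENNReal.natCast_ne_top C) h1
    simp [evpow, h2, P, min_eq_left h1]
  have hmem : ∀ f, MemEVLp μ p f ↔ f ∈ VLp.sp μ P hPm hP := by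
    intro f
    simp only [MemEVLp, hmod]
    rfl
  have hbb : ∀ f : Ω → ℝ, BddBelow {lam : ℝ | 0 < lam ∧ eModular μ p f lam ≤ 1} :=
    fun f => ⟨0, fun c hc => hc.1.le⟩
  have hle : ∀ (f : Ω → ℝ) (c : ℝ), 0 < c → VLp.md μ P f c ≤ 1 → eVNorm μ p f ≤ c := by
    intro f c hc h
    exact csInf_le (hbb f) ⟨hc, by rwa [hmod]⟩
  have hlt : ∀ (f : Ω → ℝ) (c : ℝ), f ∈ VLp.sp μ P hPm hP → eVNorm μ p f < c →
      0 < c ∧ VLp.md μ P f c ≤ 1 := by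
    intro f c hf h
    obtain ⟨d, ⟨hd0, hd1⟩, hdc⟩ := exists_lt_of_csInf_lt (by
      obtain ⟨_, d, hd, h⟩ := hf
      exact ⟨d, hd, by rwa [hmod]⟩) h
    rw [hmod] at hd1
    exact ⟨hd0.trans hdc, (VLp.md_anti hP f hd0 hdc.le).trans hd1⟩
  have hKs : ∀ f ∈ K, f ∈ VLp.sp μ P hPm hP := fun f hf => (hmem f).1 (hKmem f hf)
  set δ : ℝ := ε / 256 with hδ
  have hδ0 : 0 < δ := by positivity
  -- total boundedness
  have htb : ∃ S : Finset (Ω → ℝ), (∀ g ∈ S, g ∈ K) ∧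
      ∀ f ∈ K, ∃ g ∈ S, VLp.md μ P (f - g) δ ≤ 1 := by
    by_contra hcon
    push Not at hcon
    obtain ⟨f, hfK, hf⟩ := exists_seq_of_forall_finset_exists (fun f => f ∈ K)
      (fun g f => 1 < VLp.md μ P (f - g) δ) hcon
    obtain ⟨g, hgK, φ, hφ, hlim⟩ := hKcompact f hfK
    obtain ⟨N, hN⟩ := (hlim.eventually (gt_mem_nhds (by positivity : 0 < δ / 4))).exists_forall_of_atTop
    have key : ∀ n, N ≤ n → VLp.md μ P (f (φ n) - g) (δ / 4) ≤ 1 := fun n hn =>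
      (hlt _ _ (Submodule.sub_mem _ (hKs _ (hfK _)) (hKs _ hgK)) (hN n hn)).2
    have h1 := key N le_rfl
    have h2 := key (N + 1) (Nat.le_succ N)
    rw [← VLp.md_neg] at h1
    have h3 := VLp.md_add hPm hP
      (Submodule.sub_mem _ (hKs _ (hfK (φ (N + 1)))) (hKs _ hgK)).1 (by positivity) h2 h1
    have h4 := hf (φ N) (φ (N + 1)) (hφ (Nat.lt_succ_self N))
    rw [show f (φ (N + 1)) - g + -(f (φ N) - g) = f (φ (N + 1)) - f (φ N) by abel,
      show 4 * (δ / 4) = δ by ring] at h3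
    exact absurd h3 (not_le.2 h4)
  obtain ⟨S, hSK, hS⟩ := htb
  have hdense : ∀ g : S, ∃ s : SimpleFunc Ω ℝ, μ (Function.support s) < ∞ ∧
      VLp.md μ P ((g : Ω → ℝ) - s) δ ≤ 1 := by
    rintro ⟨g, hg⟩
    obtain ⟨hgm, c, hc, h1⟩ := hKs g (hSK g hg)
    exact VLp.dense hPm hP hC hgm hc hδ0 h1
  choose s hs1 hs2 using hdense
  obtain ⟨J, A, hA, hAf, hop, hsop⟩ := VLp.core hPm hP hC s hs1 hδ0
  obtain ⟨F, hFfin, hF⟩ := VLp.exists_lin (μ := μ) hPm hP J A hAf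
  refine ⟨F, hFfin, ?_, ?_⟩
  · intro f hf
    have hf' := (hmem f).1 hf
    rw [hF f hf']
    have hm : AEStronglyMeasurable (VLp.op μ J A f) μ :=
      (VLp.op_meas J hA f).aestronglyMeasurable
    obtain ⟨hfm, c, hc, h1⟩ := hf'
    refine ⟨(hmem _).2 ⟨hm, 2 * c, by positivity, hop f c hfm hc h1⟩, ?_⟩
    have : eVNorm μ p (VLp.op μ J A f) / 2 ≤ eVNorm μ p f := by
      refine le_csInf ⟨c, hc, by rwa [hmod]⟩ ?_
      rintro d ⟨hd, h2⟩
      rw [hmod] at h2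
      have := hle _ _ (by positivity) (hop f d hfm hd h2)
      linarith
    linarith
  · intro f hfK
    obtain ⟨g, hg, hfg⟩ := hS f hfK
    have hfs := hKs f hfK
    have hgs := hKs g (hSK g hg)
    set t : Ω → ℝ := ⇑(s ⟨g, hg⟩) with ht
    have hgt : VLp.md μ P (g - t) δ ≤ 1 := hs2 ⟨g, hg⟩
    have hgts : g - t ∈ VLp.sp μ P hPm hP :=
      ⟨hgs.1.sub (s ⟨g, hg⟩).aestronglyMeasurable, δ, hδ0, hgt⟩
    have hts : t ∈ VLp.sp μ P hPm hP := by
      have := Submodule.sub_mem _ hgs hgts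
      simpa using this
    have hh := Submodule.sub_mem _ hfs hts
    have e1 : VLp.md μ P (f - t) (4 * δ) ≤ 1 := by
      have := VLp.md_add hPm hP (Submodule.sub_mem _ hfs hgs).1 hδ0 hfg hgt
      simpa using this
    have e2 : VLp.md μ P (F (f - t)) (8 * δ) ≤ 1 := by
      rw [hF _ hh]
      have := hop _ _ hh.1 (by positivity) e1
      rwa [show 2 * (4 * δ) = 8 * δ by ring] at this
    have e3 : VLp.md μ P ((f - t) + -(F (f - t))) (4 * (8 * δ)) ≤ 1 := by
      refine VLp.md_add hPm hP hh.1 (by positivity) ?_ (by rwa [VLp.md_neg])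
      exact (VLp.md_anti hP _ (by positivity) (by linarith)).trans e1
    have e4 : VLp.md μ P (t - F t) (4 * (8 * δ)) ≤ 1 := by
      rw [hF _ hts]
      exact (VLp.md_anti hP _ hδ0 (by linarith)).trans (hsop ⟨g, hg⟩)
    have hm3 : AEStronglyMeasurable ((f - t) + -(F (f - t))) μ := by
      rw [hF _ hh]
      exact hh.1.add (VLp.op_meas J hA _).aestronglyMeasurable.neg
    have e5 := VLp.md_add hPm hP hm3 (by positivity) e3 e4
    rw [show (f - t) + -(F (f - t)) + (t - F t) = f - F f by rw [map_sub]; abel] at e5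
    have := hle _ _ (by positivity) e5
    linarith
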